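/- Let n ≥ 1 and let T be a tree (a connected acyclic simple graph) on n+1 vertices, and let A be its n×(n+1) edge–vertex incidence matrix, i.e., rows are indexed by the n edges of T, columns by the n+1 vertices, and the entry in row e and column v is 1 if and only if v is an endpoint of e. Then the only nonempty 1-free set of columns of A is the full set of all n+1 columns; in particular, the stopping distance of A equals n+1. -/

import Mathlib

/-- Let `n ≥ 1` and let `T` be a tree on `n+1` vertices, with edge–vertex incidence matrix
`A` (rows indexed by the edges of `T`, columns by the vertices, entry `1` iff the vertex is
an endpoint of the edge).  Then the only nonempty 1-free set of columns of `A` is the full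
set of all `n+1` columns; in particular the stopping distance of `A` is `n+1`. -/
theorem stmt_14 (n : ℕ) (hn : 1 ≤ n) (T : SimpleGraph (Fin (n + 1)))
    [DecidableRel T.Adj] (hT : T.IsTree)
    (S : Finset (Fin (n + 1))) (hS : S.Nonempty)
    (hfree : ∀ e ∈ T.edgeFinset, (∑ v ∈ S, if v ∈ e then (1 : ℕ) else 0) ≠ 1) :
    S = Finset.univ := by
  have step : ∀ a b, T.Adj a b → a ∈ S → b ∈ S := by
    intro a b hab ha
    by_contra hb
    apply hfree s(a, b) (by simpa using hab)
    rw [Finset.sum_eq_single_of_mem a ha]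
    · simp
    · intro c hc hca
      have hcb : c ≠ b := fun h => hb (h ▸ hc)
      simp [hca, hcb]
  obtain ⟨a, ha⟩ := hS
  refine Finset.eq_univ_iff_forall.2 fun b => ?_
  obtain ⟨p⟩ := hT.connected.preconnected a b
  induction p with
  | nil => exact ha
  | cons h _ ih => exact ih (step _ _ h ha)
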